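/- Let α ∈ (ℤ_{≥0})ⁿ, set q_α := Σ_{j=1}^n (α_j+1)/p_j − 1, and let t ∈ ℝ. If q_α ≠ 0, then ∫_{{−t−1 < ψ < −t}} |w^α|² e^{−ψ} dλ_n = πⁿ (q_α+1)(e^{−q_α t} − e^{−q_α (t+1)}) / (q_α · Π_{j=1}^n (α_j+1)); if q_α = 0, then ∫_{{−t−1 < ψ < −t}} |w^α|² e^{−ψ} dλ_n = πⁿ / Π_{j=1}^n (α_j+1). -/

import Mathlib

open MeasureTheory Filter

/-- `psi p w = max_j 2 p_j log |w_j|`. -/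
noncomputable def psi {n : ℕ} (p : Fin n → ℝ) (w : Fin n → ℂ) : ℝ :=
  ⨆ j, 2 * p j * Real.log ‖w j‖

lemma aux_ftc (F f : ℝ → ℝ) (hF : ∀ x, HasDerivAt F (f x) x) (hf : Continuous f)
    (a b : ℝ) (hab : a ≤ b) (h0 : ∀ x ∈ Set.Ioc a b, 0 ≤ f x) :
    ∫⁻ x in Set.Ioc a b, ENNReal.ofReal (f x) = ENNReal.ofReal (F b - F a) := by
  rw [← intervalIntegral.integral_eq_sub_of_hasDerivAt (fun x _ => hF x)
    (hf.intervalIntegrable a b), intervalIntegral.integral_of_le hab,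
    ofReal_integral_eq_lintegral_ofReal]
  · exact (hf.intervalIntegrable a b).1
  · exact (ae_restrict_iff' measurableSet_Ioc).2 (Eventually.of_forall h0)

lemma aux_prod (n : ℕ) (f : Fin n → ℂ → ENNReal) (hf : ∀ j, Measurable (f j)) :
    ∫⁻ w : Fin n → ℂ, ∏ j, f j (w j) = ∏ j, ∫⁻ z, f j z := by
  induction n with
  | zero => simp [volume_pi]
  | succ n ih =>
    have h := (volume_preserving_piFinSuccAbove (fun _ : Fin (n + 1) => ℂ) 0).symm
    rw [← h.lintegral_comp_emb (MeasurableEquiv.measurableEmbedding _)]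
    rw [Fin.prod_univ_succ, ← ih (fun j => f j.succ) (fun j => hf _), Measure.volume_eq_prod,
      ← lintegral_prod_mul (hf 0).aemeasurable]
    · refine lintegral_congr fun x => ?_
      rw [Fin.prod_univ_succ]
      simp [MeasurableEquiv.piFinSuccAbove]
    · exact (Finset.measurable_prod _ fun j _ => (hf j.succ).comp (measurable_pi_apply j)).aemeasurable

lemma aux_disc (a : ℕ) (R : ℝ) (hR : 0 < R) :
    ∫⁻ z : ℂ, (if ‖z‖ < R then ENNReal.ofReal ((‖z‖ ^ a) ^ 2) else 0) =
      ENNReal.ofReal (Real.pi * R ^ (2 * a + 2) / (a + 1)) := by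
  rw [← Complex.lintegral_comp_polarCoord_symm]
  have hm : Measurable (fun r : ℝ => if r < R then ENNReal.ofReal (r ^ (2 * a + 1)) else 0) :=
    Measurable.ite measurableSet_Iio (by fun_prop) measurable_const
  have : ∫⁻ p in polarCoord.target, ENNReal.ofReal p.1 •
      (if ‖Complex.polarCoord.symm p‖ < R then
        ENNReal.ofReal ((‖Complex.polarCoord.symm p‖ ^ a) ^ 2) else 0) =
      ∫⁻ p in polarCoord.target,
        (if p.1 < R then ENNReal.ofReal (p.1 ^ (2 * a + 1)) else 0) * (1 : ENNReal) := by
    refine setLIntegral_congr_fun polarCoord.open_target.measurableSet ?_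
    rintro ⟨r, θ⟩ h
    have hr : 0 < r := by simpa using h.1
    simp only [Complex.norm_polarCoord_symm, abs_of_pos hr, smul_eq_mul, mul_one]
    split_ifs
    · rw [← ENNReal.ofReal_mul hr.le]; congr 1; ring
    · simp
  rw [this, polarCoord_target, Measure.volume_eq_prod, ← Measure.prod_restrict,
    lintegral_prod_mul (f := fun r : ℝ => if r < R then ENNReal.ofReal (r ^ (2 * a + 1)) else 0)
      (g := fun _ : ℝ => (1 : ENNReal)) hm.aemeasurable aemeasurable_const]
  have h2 : ∫⁻ r in Set.Ioi (0 : ℝ), (if r < R then ENNReal.ofReal (r ^ (2 * a + 1)) else 0) =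
      ∫⁻ r in Set.Ioc (0 : ℝ) R, ENNReal.ofReal (r ^ (2 * a + 1)) := by
    rw [setLIntegral_congr (Ioo_ae_eq_Ioc (μ := volume) (a := (0 : ℝ)) (b := R)).symm]
    rw [← lintegral_indicator measurableSet_Ioi, ← lintegral_indicator measurableSet_Ioo]
    refine lintegral_congr fun r => ?_
    by_cases h1 : 0 < r <;> by_cases h2 : r < R <;> simp [Set.indicator, h1, h2]
  rw [h2, aux_ftc (fun r => r ^ (2 * a + 2) / (2 * a + 2)) (fun r => r ^ (2 * a + 1))]
  · have : ∫⁻ _ in Set.Ioo (-Real.pi) Real.pi, (1 : ENNReal) = ENNReal.ofReal (2 * Real.pi) := by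
      rw [setLIntegral_one, Real.volume_Ioo]; congr 1; ring
    rw [this, ← ENNReal.ofReal_mul]
    · congr 1
      have : (a : ℝ) + 1 ≠ 0 := by positivity
      have : (2 * a : ℝ) + 2 ≠ 0 := by positivity
      simp; field_simp
    · simp; positivity
  · intro x
    have := (hasDerivAt_pow (2 * a + 2) x).div_const (2 * a + 2 : ℝ)
    refine this.congr_deriv ?_
    have : (2 * a : ℝ) + 2 ≠ 0 := by positivity
    push_cast
    rw [mul_div_assoc, mul_comm, div_mul_cancel₀ _ this]
  · fun_prop
  · exact hR.le
  · intro x hx; exact pow_nonneg hx.1.le _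

lemma aux_psi_meas {n : ℕ} (p : Fin n → ℝ) : Measurable (psi p) := by
  unfold psi
  exact Measurable.iSup fun j => by fun_prop

lemma aux_psi_lt {n : ℕ} (hn : 0 < n) (p : Fin n → ℝ) (hp : ∀ j, 0 < p j) (w : Fin n → ℂ)
    (hw : ∀ j, w j ≠ 0) (s : ℝ) :
    psi p w < s ↔ ∀ j, ‖w j‖ < Real.exp (s / (2 * p j)) := by
  have : Nonempty (Fin n) := ⟨⟨0, hn⟩⟩
  have h1 : psi p w < s ↔ ∀ j, 2 * p j * Real.log ‖w j‖ < s := by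
    unfold psi
    constructor
    · intro h j
      exact (le_ciSup (Set.finite_range _).bddAbove j).trans_lt h
    · intro h
      obtain ⟨j, hj⟩ := exists_eq_ciSup_of_finite (f := fun j => 2 * p j * Real.log ‖w j‖)
      rw [← hj]; exact h j
  rw [h1]
  refine forall_congr' fun j => ?_
  rw [← Real.log_lt_iff_lt_exp (norm_pos_iff.2 (hw j)), lt_div_iff₀ (by linarith [hp j]), mul_comm]

lemma aux_ae (n : ℕ) : ∀ᵐ w : Fin n → ℂ, ∀ j, w j ≠ 0 := by
  rw [ae_all_iff]
  intro j
  exact (Measure.quasiMeasurePreserving_eval (fun _ : Fin n => (volume : Measure ℂ)) j).ae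
    (Measure.ae_ne volume 0)

lemma aux_Iio (n : ℕ) (hn : 0 < n) (p : Fin n → ℝ) (hp : ∀ j, 0 < p j)
    (α : Fin n → ℕ) (s : ℝ) :
    ∫⁻ w in {w : Fin n → ℂ | psi p w < s}, ENNReal.ofReal (‖∏ j, (w j) ^ (α j)‖ ^ 2) =
      ENNReal.ofReal (Real.pi ^ n / (∏ j, ((α j : ℝ) + 1)) *
        Real.exp ((∑ j, ((α j : ℝ) + 1) / p j) * s)) := by
  rw [← lintegral_indicator (measurableSet_lt (aux_psi_meas p) measurable_const)]
  have h1 : ∫⁻ w, Set.indicator {w : Fin n → ℂ | psi p w < s}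
      (fun w => ENNReal.ofReal (‖∏ j, (w j) ^ (α j)‖ ^ 2)) w =
      ∫⁻ w : Fin n → ℂ, ∏ j, (if ‖w j‖ < Real.exp (s / (2 * p j)) then
        ENNReal.ofReal ((‖w j‖ ^ α j) ^ 2) else 0) := by
    refine lintegral_congr_ae ?_
    filter_upwards [aux_ae n] with w hw
    have := aux_psi_lt hn p hp w hw s
    by_cases h : psi p w < s
    · rw [Set.indicator_of_mem (by exact h)]
      have h' := this.1 h
      simp only [h', if_true]
      rw [← ENNReal.ofReal_prod_of_nonneg (fun _ _ => by positivity), norm_prod, Finset.prod_pow]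
      simp
    · rw [Set.indicator_of_notMem (by exact h)]
      rw [this] at h
      push Not at h
      obtain ⟨j, hj⟩ := h
      exact (Finset.prod_eq_zero (Finset.mem_univ j) (if_neg (not_lt.2 hj))).symm
  rw [h1, aux_prod n (fun j z => if ‖z‖ < Real.exp (s / (2 * p j)) then
        ENNReal.ofReal ((‖z‖ ^ α j) ^ 2) else 0)]
  · simp only [aux_disc _ _ (Real.exp_pos _)]
    rw [← ENNReal.ofReal_prod_of_nonneg (fun _ _ => by positivity)]
    congr 1
    rw [Finset.prod_div_distrib, Finset.prod_mul_distrib, Finset.sum_mul, Real.exp_sum]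
    simp only [Finset.prod_const, Finset.card_univ, Fintype.card_fin]
    rw [div_mul_eq_mul_div]
    congr 2
    refine Finset.prod_congr rfl fun j _ => ?_
    rw [← Real.exp_nat_mul]
    congr 1
    have := (hp j).ne'
    push_cast
    field_simp
  · intro j
    exact Measurable.ite (measurableSet_lt measurable_norm measurable_const) (by fun_prop)
      measurable_const

lemma aux_map (n : ℕ) (hn : 0 < n) (p : Fin n → ℝ) (hp : ∀ j, 0 < p j)
    (α : Fin n → ℕ) (C Q : ℝ) (hC : C = Real.pi ^ n / (∏ j, ((α j : ℝ) + 1)))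
    (hQ : Q = ∑ j, ((α j : ℝ) + 1) / p j) (hQ0 : 0 < Q) :
    Measure.map (psi p) ((volume : Measure (Fin n → ℂ)).withDensity
      fun w => ENNReal.ofReal (‖∏ j, (w j) ^ (α j)‖ ^ 2)) =
    (volume : Measure ℝ).withDensity fun s => ENNReal.ofReal (C * (Q * Real.exp (Q * s))) := by
  have hC0 : 0 < C := by rw [hC]; positivity
  set ν := Measure.map (psi p) ((volume : Measure (Fin n → ℂ)).withDensity
      fun w => ENNReal.ofReal (‖∏ j, (w j) ^ (α j)‖ ^ 2)) with hν
  have hI : ∀ s, ν (Set.Iio s) = ENNReal.ofReal (C * Real.exp (Q * s)) := by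
    intro s
    rw [hν, Measure.map_apply (aux_psi_meas p) measurableSet_Iio,
      withDensity_apply _ (aux_psi_meas p measurableSet_Iio), hC, hQ, ← aux_Iio n hn p hp]
    rfl
  have hIco : ∀ a b, a ≤ b → ν (Set.Ico a b) =
      ENNReal.ofReal (C * Real.exp (Q * b) - C * Real.exp (Q * a)) := by
    intro a b hab
    rw [ENNReal.ofReal_sub _ (by positivity), ← hI, ← hI, ← measure_sdiff
      (Set.Iio_subset_Iio hab) measurableSet_Iio.nullMeasurableSet (by rw [hI]; simp)]
    congr 1
    ext x; simp
  refine Measure.ext_of_Ico' _ _ (fun a b hab => by rw [hIco a b hab.le]; simp) ?_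
  intro a b hab
  rw [hIco a b hab.le, withDensity_apply _ measurableSet_Ico,
    setLIntegral_congr (Ico_ae_eq_Ioc (μ := volume)),
    aux_ftc (fun s => C * Real.exp (Q * s)) (fun s => C * (Q * Real.exp (Q * s))) _ (by fun_prop)
      _ _ hab.le (fun _ _ => by positivity)]
  intro x
  have := (((hasDerivAt_id x).const_mul Q).exp).const_mul C
  refine this.congr_deriv ?_
  simp only [id]; ring

lemma aux_main (n : ℕ) (hn : 0 < n) (p : Fin n → ℝ) (hp : ∀ j, 0 < p j)
    (α : Fin n → ℕ) (t : ℝ) (q : ℝ) (hq : q = ∑ j, ((α j : ℝ) + 1) / p j - 1) :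
    0 < q + 1 ∧ (∫⁻ w in {w : Fin n → ℂ | -t - 1 < psi p w ∧ psi p w < -t},
          ENNReal.ofReal (‖∏ j, (w j) ^ (α j)‖ ^ 2 * Real.exp (-psi p w))) =
     ∫⁻ s in Set.Ioc (-t - 1) (-t), ENNReal.ofReal
      (Real.pi ^ n / (∏ j, ((α j : ℝ) + 1)) * ((q + 1) * Real.exp (q * s))) := by
  have : Nonempty (Fin n) := ⟨⟨0, hn⟩⟩
  have hq1 : q + 1 = ∑ j, ((α j : ℝ) + 1) / p j := by rw [hq]; ring
  have hQ0 : 0 < q + 1 := by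
    rw [hq1]
    exact Finset.sum_pos (fun j _ => div_pos (by positivity) (hp j)) Finset.univ_nonempty
  refine ⟨hQ0, ?_⟩
  have hmap := aux_map n hn p hp α _ (q + 1) rfl hq1 hQ0
  have hS : {w : Fin n → ℂ | -t - 1 < psi p w ∧ psi p w < -t} =
      psi p ⁻¹' (Set.Ioo (-t - 1) (-t)) := rfl
  have hSm := aux_psi_meas p (measurableSet_Ioo (a := -t - 1) (b := -t))
  rw [hS]
  calc _ = ∫⁻ w in psi p ⁻¹' (Set.Ioo (-t - 1) (-t)), ENNReal.ofReal (Real.exp (-psi p w))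
        ∂((volume : Measure (Fin n → ℂ)).withDensity
      fun w => ENNReal.ofReal (‖∏ j, (w j) ^ (α j)‖ ^ 2)) := by
        rw [setLIntegral_withDensity_eq_setLIntegral_mul _ (by fun_prop)
          (by have := aux_psi_meas p; fun_prop) hSm]
        refine lintegral_congr fun w => ?_
        rw [ENNReal.ofReal_mul (by positivity)]; rfl
    _ = ∫⁻ s in Set.Ioo (-t - 1) (-t), ENNReal.ofReal (Real.exp (-s)) ∂(Measure.map (psi p)
        ((volume : Measure (Fin n → ℂ)).withDensity
      fun w => ENNReal.ofReal (‖∏ j, (w j) ^ (α j)‖ ^ 2))) := by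
        rw [setLIntegral_map measurableSet_Ioo (by fun_prop) (aux_psi_meas p)]
    _ = _ := by
        rw [hmap, setLIntegral_withDensity_eq_setLIntegral_mul _ (by fun_prop)
          (by fun_prop) measurableSet_Ioo, setLIntegral_congr (Ioo_ae_eq_Ioc (μ := volume))]
        refine lintegral_congr fun s => ?_
        rw [Pi.mul_apply, ← ENNReal.ofReal_mul (by positivity)]
        congr 1
        rw [mul_assoc, mul_assoc, ← Real.exp_add]
        congr 4
        ring

theorem stmt_3 (n : ℕ) (hn : 0 < n) (p : Fin n → ℝ) (hp : ∀ j, 0 < p j)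
    (α : Fin n → ℕ) (t : ℝ)
    (q : ℝ) (hq : q = ∑ j, ((α j : ℝ) + 1) / p j - 1) :
    (q ≠ 0 →
      (∫⁻ w in {w : Fin n → ℂ | -t - 1 < psi p w ∧ psi p w < -t},
          ENNReal.ofReal (‖∏ j, (w j) ^ (α j)‖ ^ 2 * Real.exp (-psi p w))) =
        ENNReal.ofReal (Real.pi ^ n * (q + 1) *
          (Real.exp (-(q * t)) - Real.exp (-(q * (t + 1)))) /
          (q * ∏ j, ((α j : ℝ) + 1)))) ∧
    (q = 0 →
      (∫⁻ w in {w : Fin n → ℂ | -t - 1 < psi p w ∧ psi p w < -t},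
          ENNReal.ofReal (‖∏ j, (w j) ^ (α j)‖ ^ 2 * Real.exp (-psi p w))) =
        ENNReal.ofReal (Real.pi ^ n / ∏ j, ((α j : ℝ) + 1))) := by
  obtain ⟨hQ0, hI⟩ := aux_main n hn p hp α t q hq
  have hP : (∏ j, ((α j : ℝ) + 1)) ≠ 0 := by positivity
  have hP0 : 0 < (∏ j, ((α j : ℝ) + 1)) := by positivity
  rw [hI]
  constructor
  · intro h
    rw [aux_ftc (fun s => Real.pi ^ n / (∏ j, ((α j : ℝ) + 1)) * ((q + 1) * (Real.exp (q * s) / q)))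
      _ _ (by fun_prop) _ _ (by linarith) (fun _ _ => by positivity)]
    · congr 1
      rw [show q * -t = -(q * t) by ring, show q * (-t - 1) = -(q * (t + 1)) by ring]
      field_simp
    · intro x
      have := ((((((hasDerivAt_id x).const_mul q).exp).div_const q).const_mul (q + 1)).const_mul
        (Real.pi ^ n / (∏ j, ((α j : ℝ) + 1))))
      refine this.congr_deriv ?_
      simp only [id]
      field_simp
  · intro h
    subst h
    simp
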